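/- Let Ω ⊂ ℝ^d be compact and convex with non-negligible interior, μ, ν ∈ 𝒫(Ω) both absolutely continuous with respect to Lebesgue measure, λ > 0, and let S₀ = T_λ^{-1} ∘ S_λ be an optimal transport map from ν to μ for the Huber cost c_{2,λ}, where S_λ is an optimal map for W₁(ν, ρ_λ) and ρ_λ is the unique solution of the WROF problem. Then for ν-almost every y, S_λ(y) = y + s_λ(|S₀(y) − y|)·(S₀(y) − y)/|S₀(y) − y|, where s_λ(t) = sign(t)(|t| − λ)_+ is the soft-thresholding map and the expression is interpreted as 0 when S₀(y) = y. In particular ρ_λ = (S_λ)_# ν. -/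

import Mathlib

/-!
Write `F x y z = ‖x - z‖² / 2 + λ ‖z - y‖`. For fixed `x, y` this is a strongly convex function of
`z` whose minimizer `softPt λ x y` is obtained by moving from `y` towards `x` by the soft-thresholded
distance; quantitatively `F x y z ≥ F x y (softPt λ x y) + ‖z - softPt λ x y‖² / 2`
(`softPt_strong_min`).

Put `R y = softPt λ (S₀ y) y`. Since `Tinv` inverts `Tlam`, one has `Tlam (S₀ y) = Slam y` for
`ν`-almost every `y`, so the optimality of `Tlam` and `Slam` gives
`∫ F (S₀ y) y (Slam y) dν ≤ wrof ρlam`. By convexity of `Ω` the measure `R_# ν` is a competitor in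
the WROF problem, and the plans induced by `(S₀, R)` and `(R, id)` give
`wrof (R_# ν) ≤ ∫ F (S₀ y) y (R y) dν`. Minimality of `ρlam` then turns the strong minimality
inequality into `∫ ‖Slam y - R y‖² dν ≤ 0`, that is, `Slam = R` almost everywhere.
-/

open MeasureTheory Filter Topology

noncomputable section

abbrev Ed (d : ℕ) := EuclideanSpace ℝ (Fin d)

variable {d : ℕ}

/-- `γ` is a coupling (transport plan) between `μ` and `ν`. -/
def IsCoupling (μ ν : Measure (Ed d)) (γ : Measure (Ed d × Ed d)) : Prop :=
  γ.map Prod.fst = μ ∧ γ.map Prod.snd = ν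

/-- The optimal transport cost `𝓘_c(μ,ν)` for the pointwise cost `c`. -/
def tCost (c : Ed d → Ed d → ℝ) (μ ν : Measure (Ed d)) : ℝ :=
  sInf {r | ∃ γ : Measure (Ed d × Ed d), IsCoupling μ ν γ ∧ r = ∫ p, c p.1 p.2 ∂γ}

/-- The Wasserstein-1 distance. -/
def W1 (μ ν : Measure (Ed d)) : ℝ := tCost (fun x y => ‖x - y‖) μ ν

/-- The squared Wasserstein-2 distance `W₂²(μ,ν)`. -/
def W2sq (μ ν : Measure (Ed d)) : ℝ := tCost (fun x y => ‖x - y‖ ^ 2) μ ν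

/-- The quadratic cost `c₂(x,y) = |x-y|²/2`. -/
def c2 (x y : Ed d) : ℝ := ‖x - y‖ ^ 2 / 2

/-- The Huber cost `c_{2,λ}`. -/
def huber (lam : ℝ) (x y : Ed d) : ℝ :=
  if ‖x - y‖ ≤ lam then ‖x - y‖ ^ 2 / 2 else lam * ‖x - y‖ - lam ^ 2 / 2

/-- The `c`-transform on `Ω`: `φ^c(x) = inf_{y ∈ Ω} c(x,y) - φ(y)`. -/
def ctrans (c : Ed d → Ed d → ℝ) (Ω : Set (Ed d)) (φ : Ed d → ℝ) (x : Ed d) : ℝ :=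
  sInf ((fun y => c x y - φ y) '' Ω)

/-- A Borel probability measure concentrated on `Ω`. -/
def ProbOn (Ω : Set (Ed d)) (μ : Measure (Ed d)) : Prop :=
  IsProbabilityMeasure μ ∧ μ Ωᶜ = 0

/-- `γ` is an optimal transport plan between `μ` and `ν` for cost `c`. -/
def IsOptimalPlan (c : Ed d → Ed d → ℝ) (μ ν : Measure (Ed d))
    (γ : Measure (Ed d × Ed d)) : Prop :=
  IsCoupling μ ν γ ∧ ∀ γ' : Measure (Ed d × Ed d), IsCoupling μ ν γ' →
    ∫ p, c p.1 p.2 ∂γ ≤ ∫ p, c p.1 p.2 ∂γ'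

/-- `T` is an optimal transport map from `μ` to `ν` for cost `c`. -/
def IsOptimalMap (c : Ed d → Ed d → ℝ) (μ ν : Measure (Ed d)) (T : Ed d → Ed d) : Prop :=
  AEMeasurable T μ ∧ μ.map T = ν ∧
    ∀ γ : Measure (Ed d × Ed d), IsCoupling μ ν γ →
      ∫ x, c x (T x) ∂μ ≤ ∫ p, c p.1 p.2 ∂γ

/-- The WROF functional `(1/2) W₂²(μ,ρ) + λ W₁(ρ,ν)`. -/
def wrof (lam : ℝ) (μ ν ρ : Measure (Ed d)) : ℝ := W2sq μ ρ / 2 + lam * W1 ρ ν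

/-- `ρ ∈ B_λ(μ)`: there exists an optimal plan for the Huber cost `c_{2,λ}` from `μ` to `ρ`
supported in `{|x-y| ≤ λ}`. -/
def Bset (lam : ℝ) (μ ρ : Measure (Ed d)) : Prop :=
  ∃ γ : Measure (Ed d × Ed d), IsOptimalPlan (huber lam) μ ρ γ ∧
    γ {p : Ed d × Ed d | lam < ‖p.1 - p.2‖} = 0

/-- `φ` solves the dual problem `sup_{φ ∈ λ-Lip(Ω)} ∫ φ^{c₂} dμ + ∫ φ dν`. -/
def DualSol (Ω : Set (Ed d)) (lam : ℝ) (μ ν : Measure (Ed d)) (φ : Ed d → ℝ) : Prop :=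
  LipschitzOnWith (Real.toNNReal lam) φ Ω ∧
    ∀ ψ : Ed d → ℝ, LipschitzOnWith (Real.toNNReal lam) ψ Ω →
      (∫ x, ctrans c2 Ω ψ x ∂μ) + ∫ x, ψ x ∂ν ≤ (∫ x, ctrans c2 Ω φ x ∂μ) + ∫ x, φ x ∂ν

/-- `φ ∈ ∂((1/2)W₂²(·,μ))(ρ)`, i.e. `φ ∈ C(Ω)` with `∫φ^{c₂}dμ + ∫φ dρ = (1/2)W₂²(ρ,μ)`. -/
def InSubdiffW2 (Ω : Set (Ed d)) (μ ρ : Measure (Ed d)) (φ : Ed d → ℝ) : Prop :=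
  ContinuousOn φ Ω ∧ (∫ x, ctrans c2 Ω φ x ∂μ) + ∫ x, φ x ∂ρ = W2sq ρ μ / 2

/-- The divergence `D_λ(ν,ρ)` with reference measure `μ`. -/
def Dlam (Ω : Set (Ed d)) (lam : ℝ) (μ ν ρ : Measure (Ed d)) : EReal :=
  ((W2sq ν μ / 2 : ℝ) : EReal) - ((W2sq ρ μ / 2 : ℝ) : EReal) -
    ⨆ φ ∈ {φ : Ed d → ℝ | InSubdiffW2 Ω μ ρ φ ∧ LipschitzOnWith (Real.toNNReal lam) φ Ω},
      (((∫ x, φ x ∂ν) - ∫ x, φ x ∂ρ : ℝ) : EReal)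

/-- `φ` is `c`-concave on `Ω`: `φ = ψ^c` for some `ψ`. -/
def CConcaveOn (c : Ed d → Ed d → ℝ) (Ω : Set (Ed d)) (φ : Ed d → ℝ) : Prop :=
  ∃ ψ : Ed d → ℝ, ∀ x ∈ Ω, φ x = ctrans c Ω ψ x

/-- The (topological) support of a measure. -/
def msupport {α : Type*} [TopologicalSpace α] [MeasurableSpace α] (γ : Measure α) : Set α :=
  {p | ∀ U : Set α, IsOpen U → p ∈ U → γ U ≠ 0}

/-- The minimizer of `z ↦ ‖x - z‖² / 2 + λ ‖z - y‖`: the soft-thresholding of `x - y`, based at `y`.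
For `x = y` the junk value of the division makes it equal to `y`. -/
def softPt (lam : ℝ) (x y : Ed d) : Ed d :=
  y + (max (‖x - y‖ - lam) 0 / ‖x - y‖) • (x - y)

/-- The residual `x - softPt λ x y` is a subgradient of `λ ‖· - y‖` at `softPt λ x y`. -/
lemma softPt_subgradient {lam : ℝ} (hlam : 0 < lam) (x y : Ed d) :
    ‖x - softPt lam x y‖ ≤ lam ∧
      inner ℝ (x - softPt lam x y) (softPt lam x y - y) = lam * ‖softPt lam x y - y‖ := by
  rcases le_or_gt ‖x - y‖ lam with h | h
  · have hR : softPt lam x y = y := by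
      simp [softPt, max_eq_right (sub_nonpos.2 h)]
    simp [hR, h]
  · have hr : 0 < ‖x - y‖ := hlam.trans h
    have e1 : softPt lam x y - y = ((‖x - y‖ - lam) / ‖x - y‖) • (x - y) := by
      simp [softPt, max_eq_left (sub_nonneg.2 h.le)]
    have e2 : x - softPt lam x y = (lam / ‖x - y‖) • (x - y) := by
      have : x - softPt lam x y = (x - y) - (softPt lam x y - y) := by abel
      rw [this, e1]
      have h1 : lam / ‖x - y‖ = 1 - (‖x - y‖ - lam) / ‖x - y‖ := by field_simp; ring
      rw [h1, sub_smul, one_smul]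
    have hq : 0 ≤ (‖x - y‖ - lam) / ‖x - y‖ := div_nonneg (sub_nonneg.2 h.le) hr.le
    rw [e1, e2, norm_smul, norm_smul, real_inner_smul_left, real_inner_smul_right,
      real_inner_self_eq_norm_sq, Real.norm_of_nonneg hq, Real.norm_of_nonneg (by positivity)]
    constructor
    · field_simp; exact le_rfl
    · field_simp

lemma softPt_strong_min {lam : ℝ} (hlam : 0 < lam) (x y z : Ed d) :
    ‖x - softPt lam x y‖ ^ 2 / 2 + lam * ‖softPt lam x y - y‖ + ‖z - softPt lam x y‖ ^ 2 / 2
      ≤ ‖x - z‖ ^ 2 / 2 + lam * ‖z - y‖ := by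
  obtain ⟨h1, h2⟩ := softPt_subgradient hlam x y
  set R := softPt lam x y
  have e : ‖x - z‖ ^ 2 = ‖x - R‖ ^ 2 - 2 * inner ℝ (x - R) (z - R) + ‖z - R‖ ^ 2 := by
    rw [← norm_sub_sq_real]; congr 2; abel
  have e2 : inner ℝ (x - R) (z - y) = inner ℝ (x - R) (z - R) + inner ℝ (x - R) (R - y) := by
    rw [← inner_add_right]; congr 1; abel
  have h3 : inner ℝ (x - R) (z - y) ≤ lam * ‖z - y‖ :=
    (real_inner_le_norm _ _).trans (mul_le_mul_of_nonneg_right h1 (norm_nonneg _))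
  rw [e]; linarith

lemma softPt_mem {Ω : Set (Ed d)} (hΩ : Convex ℝ Ω) {lam : ℝ} (hlam : 0 < lam) {x y : Ed d}
    (hx : x ∈ Ω) (hy : y ∈ Ω) : softPt lam x y ∈ Ω := by
  refine hΩ.add_smul_sub_mem hy hx ⟨by positivity, ?_⟩
  refine div_le_one_of_le₀ (max_le (by linarith) (norm_nonneg _)) (norm_nonneg _)

lemma tCost_le {c : Ed d → Ed d → ℝ} (hc : ∀ x y, 0 ≤ c x y) {μ ν : Measure (Ed d)}
    {γ : Measure (Ed d × Ed d)} (hγ : IsCoupling μ ν γ) : tCost c μ ν ≤ ∫ p, c p.1 p.2 ∂γ := by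
  refine csInf_le ⟨0, ?_⟩ ⟨γ, hγ, rfl⟩
  rintro r ⟨γ', -, rfl⟩
  exact integral_nonneg fun p => hc _ _

/-- Two maps on a common space `(Ed d, ν)` induce a coupling of their image measures. -/
lemma isCoupling_map {ν : Measure (Ed d)} {f g : Ed d → Ed d}
    (hf : AEMeasurable f ν) (hg : AEMeasurable g ν) :
    IsCoupling (ν.map f) (ν.map g) (ν.map fun y => (f y, g y)) := by
  have hfg : AEMeasurable (fun y => (f y, g y)) ν := hf.prodMk hg
  constructor
  · rw [AEMeasurable.map_map_of_aemeasurable measurable_fst.aemeasurable hfg]; rfl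
  · rw [AEMeasurable.map_map_of_aemeasurable measurable_snd.aemeasurable hfg]; rfl

lemma tCost_map_le {c : Ed d → Ed d → ℝ} (hc : ∀ x y, 0 ≤ c x y)
    (hcc : Continuous fun p : Ed d × Ed d => c p.1 p.2)
    {ν : Measure (Ed d)} {f g : Ed d → Ed d}
    (hf : AEMeasurable f ν) (hg : AEMeasurable g ν) :
    tCost c (ν.map f) (ν.map g) ≤ ∫ y, c (f y) (g y) ∂ν := by
  have h := tCost_le hc (isCoupling_map hf hg)
  rwa [integral_map (hf.prodMk hg) hcc.aestronglyMeasurable] at h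

/-- soft thresholding of the Huber-optimal map. With `Ω ⊂ ℝ^d` compact
convex with non-negligible interior, `μ, ν ∈ 𝒫(Ω)` both absolutely continuous, `λ > 0`,
`ρ_λ` the unique WROF solution, `T_λ` the optimal transport map for `W₂(μ,ρ_λ)`, `T_λ⁻¹` a
Borel map with `T_λ⁻¹ ∘ T_λ = id` μ-a.e., `S_λ` an optimal map for `W₁(ν,ρ_λ)` and
`S₀ = T_λ⁻¹ ∘ S_λ` an optimal transport map from `ν` to `μ` for the Huber cost: for ν-a.e.
`y`, `S_λ(y) = y + s_λ(|S₀(y) - y|) (S₀(y) - y)/|S₀(y) - y|` (interpreted as `y` when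
`S₀(y) = y`), where `s_λ(t) = sign(t)(|t| - λ)₊`; in particular `ρ_λ = (S_λ)_# ν`. -/
theorem stmt16 (d : ℕ) (Ω : Set (Ed d)) (hΩc : IsCompact Ω) (hΩconv : Convex ℝ Ω)
    (hΩint : volume (interior Ω) ≠ 0)
    (μ ν : Measure (Ed d)) (hμ : ProbOn Ω μ) (hν : ProbOn Ω ν)
    (hμac : μ ≪ (volume : Measure (Ed d))) (hνac : ν ≪ (volume : Measure (Ed d)))
    (lam : ℝ) (hlam : 0 < lam)
    (ρlam : Measure (Ed d)) (hρP : ProbOn Ω ρlam)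
    (hρmin : ∀ ρ, ProbOn Ω ρ → wrof lam μ ν ρlam ≤ wrof lam μ ν ρ)
    (Tlam : Ed d → Ed d) (hTopt : IsOptimalMap c2 μ ρlam Tlam)
    (Tinv : Ed d → Ed d) (hTinvm : Measurable Tinv)
    (hTinv : ∀ᵐ x ∂μ, Tinv (Tlam x) = x)
    (Slam S₀ : Ed d → Ed d)
    (hSlam : IsOptimalMap (fun x y => ‖x - y‖) ν ρlam Slam)
    (hS₀opt : IsOptimalMap (huber lam) ν μ S₀)
    (hcomp : S₀ =ᵐ[ν] Tinv ∘ Slam) :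
    (∀ᵐ y ∂ν,
      Slam y = y + (max (‖S₀ y - y‖ - lam) 0 / ‖S₀ y - y‖) • (S₀ y - y)) ∧
    ν.map Slam = ρlam := by
  obtain ⟨hSm, hSmap, hSo⟩ := hSlam
  obtain ⟨hS0m, hS0map, -⟩ := hS₀opt
  obtain ⟨hTm, hTmap, hTo⟩ := hTopt
  refine ⟨?_, hSmap⟩
  haveI := hν.1
  have hΩm : MeasurableSet Ω := hΩc.measurableSet
  set R : Ed d → Ed d := fun y => softPt lam (S₀ y) y with hRdef
  have hRm : AEMeasurable R ν := by
    simp only [hRdef, softPt]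
    fun_prop
  have hyΩ : ∀ᵐ y ∂ν, y ∈ Ω := mem_ae_iff.2 hν.2
  have hS0Ω : ∀ᵐ y ∂ν, S₀ y ∈ Ω := by
    have : ∀ᵐ x ∂(ν.map S₀), x ∈ Ω := by rw [hS0map]; exact mem_ae_iff.2 hμ.2
    exact ae_of_ae_map hS0m this
  have hSΩ : ∀ᵐ y ∂ν, Slam y ∈ Ω := by
    have : ∀ᵐ x ∂(ν.map Slam), x ∈ Ω := by rw [hSmap]; exact mem_ae_iff.2 hρP.2
    exact ae_of_ae_map hSm this
  have hRΩ : ∀ᵐ y ∂ν, R y ∈ Ω := by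
    filter_upwards [hyΩ, hS0Ω] with y h1 h2 using softPt_mem hΩconv hlam h2 h1
  -- Every cost below is bounded `ν`-a.e. because the maps take values in the bounded set `Ω`.
  obtain ⟨D, hD⟩ := Metric.isBounded_iff.1 hΩc.isBounded
  have hint : ∀ f g : Ed d → Ed d, AEMeasurable f ν → AEMeasurable g ν →
      (∀ᵐ y ∂ν, f y ∈ Ω) → (∀ᵐ y ∂ν, g y ∈ Ω) →
      Integrable (fun y => ‖f y - g y‖) ν ∧ Integrable (fun y => ‖f y - g y‖ ^ 2) ν := by
    intro f g hf hg hfΩ hgΩ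
    have hb : ∀ᵐ y ∂ν, ‖f y - g y‖ ≤ D := by
      filter_upwards [hfΩ, hgΩ] with y h1 h2
      rw [← dist_eq_norm]; exact hD h1 h2
    constructor
    · refine Integrable.of_bound (by fun_prop : AEMeasurable _ _).aestronglyMeasurable D ?_
      filter_upwards [hb] with y hy
      rwa [norm_norm]
    · refine Integrable.of_bound
        (by fun_prop : AEMeasurable _ _).aestronglyMeasurable (D ^ 2) ?_
      filter_upwards [hb] with y hy
      rw [norm_pow, norm_norm]
      gcongr
  obtain ⟨-, i1⟩ := hint S₀ Slam hS0m hSm hS0Ω hSΩ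
  obtain ⟨i2, -⟩ := hint Slam id hSm aemeasurable_id hSΩ hyΩ
  obtain ⟨-, i3⟩ := hint S₀ R hS0m hRm hS0Ω hRΩ
  obtain ⟨i4, -⟩ := hint R id hRm aemeasurable_id hRΩ hyΩ
  obtain ⟨-, i5⟩ := hint Slam R hSm hRm hSΩ hRΩ
  simp only [id] at i2 i4
  -- `Tlam ∘ Tinv = id` holds `ρlam`-a.e., as `ρlam` is the image of `μ` under `Tlam`;
  -- the a.e. representative of `Tlam` makes the set in question measurable.
  have hTS : ∀ᵐ y ∂ν, Tlam (S₀ y) = Slam y := by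
    have h1 : ∀ᵐ x ∂(ν.map S₀), Tlam x = hTm.mk Tlam x := by rw [hS0map]; exact hTm.ae_eq_mk
    have h2 : ∀ᵐ z ∂(ν.map Slam), hTm.mk Tlam (Tinv z) = z := by
      rw [hSmap, ← hTmap, ae_map_iff hTm]
      · filter_upwards [hTinv, hTm.ae_eq_mk] with x hx hx'
        rw [hx, ← hx']
      · exact measurableSet_eq_fun (hTm.measurable_mk.comp hTinvm) measurable_id
    filter_upwards [ae_of_ae_map hS0m h1, ae_of_ae_map hSm h2, hcomp] with y e1 e2 e3
    rw [e1, e3]; exact e2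
  have hlow2 : (∫ y, ‖S₀ y - Slam y‖ ^ 2 ∂ν) ≤ W2sq μ ρlam := by
    have e : (∫ x, c2 x (Tlam x) ∂μ) = (∫ y, ‖S₀ y - Slam y‖ ^ 2 ∂ν) / 2 := by
      have hm : AEMeasurable (fun x => c2 x (Tlam x)) (ν.map S₀) := by
        rw [hS0map]; unfold c2; fun_prop
      rw [← integral_div]
      conv_lhs => rw [← hS0map]
      rw [integral_map hS0m hm.aestronglyMeasurable]
      refine integral_congr_ae ?_
      filter_upwards [hTS] with y hy
      simp only [c2, hy]
    refine le_csInf ⟨_, μ.map fun x => (x, Tlam x), ?_, rfl⟩ ?_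
    · have := isCoupling_map (ν := μ) (f := fun x => x) (g := Tlam) aemeasurable_id' hTm
      rwa [Measure.map_id', hTmap] at this
    · rintro r ⟨γ, hγ, rfl⟩
      have := hTo γ hγ
      simp only [c2] at this e
      rw [e, integral_div] at this
      linarith
  have hlow1 : (∫ y, ‖Slam y - y‖ ∂ν) ≤ W1 ρlam ν := by
    refine le_csInf ⟨_, ν.map fun y => (Slam y, y), ?_, rfl⟩ ?_
    · have := isCoupling_map (ν := ν) (f := Slam) (g := fun x => x) hSm aemeasurable_id'
      rwa [Measure.map_id', hSmap] at this
    · rintro r ⟨γ, hγ, rfl⟩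
      have hsw : IsCoupling ν ρlam (γ.map Prod.swap) := by
        constructor
        · rw [Measure.map_map measurable_fst measurable_swap]; exact hγ.2
        · rw [Measure.map_map measurable_snd measurable_swap]; exact hγ.1
      have := hSo _ hsw
      rw [integral_map measurable_swap.aemeasurable
        (by fun_prop : Continuous fun p : Ed d × Ed d => ‖p.1 - p.2‖).aestronglyMeasurable] at this
      simpa only [norm_sub_rev, Prod.fst_swap, Prod.snd_swap] using this
  have hRP : ProbOn Ω (ν.map R) := by
    refine ⟨Measure.isProbabilityMeasure_map hRm, ?_⟩
    rw [← mem_ae_iff]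
    exact (ae_map_iff hRm hΩm).2 hRΩ
  have hup2 : W2sq μ (ν.map R) ≤ ∫ y, ‖S₀ y - R y‖ ^ 2 ∂ν := by
    have := tCost_map_le (c := fun x y : Ed d => ‖x - y‖ ^ 2) (fun _ _ => by positivity)
      (by fun_prop) hS0m hRm
    rwa [hS0map] at this
  have hup1 : W1 (ν.map R) ν ≤ ∫ y, ‖R y - y‖ ∂ν := by
    have := tCost_map_le (c := fun x y : Ed d => ‖x - y‖) (fun _ _ => by positivity)
      (by fun_prop) hRm (g := fun y => y) aemeasurable_id'
    rwa [Measure.map_id'] at this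
  have hmin := hρmin _ hRP
  unfold wrof at hmin
  have hmono := integral_mono (((i3.div_const 2).add (i4.const_mul lam)).add (i5.div_const 2))
    ((i1.div_const 2).add (i2.const_mul lam))
    (fun y => softPt_strong_min hlam (S₀ y) y (Slam y))
  rw [integral_add' ((i3.div_const 2).add (i4.const_mul lam)) (i5.div_const 2),
    integral_add' (i3.div_const 2) (i4.const_mul lam),
    integral_add' (i1.div_const 2) (i2.const_mul lam), integral_div, integral_div, integral_div,
    integral_const_mul, integral_const_mul] at hmono
  have hl1 := mul_le_mul_of_nonneg_left hlow1 hlam.le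
  have hu1 := mul_le_mul_of_nonneg_left hup1 hlam.le
  have hzero : (∫ y, ‖Slam y - R y‖ ^ 2 ∂ν) = 0 :=
    le_antisymm (by linarith) (integral_nonneg fun y => by positivity)
  rw [integral_eq_zero_iff_of_nonneg (fun y => by positivity) i5] at hzero
  filter_upwards [hzero] with y hy
  have : Slam y - R y = 0 := by simpa using hy
  exact sub_eq_zero.1 this
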